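/- For all integers n ≥ 2 and N ≥ 2, the value A*_n of the infinite game with kernel A and the matrix-game value A*_{n,N} satisfy |A*_n − A*_{n,N}| ≤ (n−1)/(2N), where A*_n = sup_μ inf_λ Ā(λ,μ) over Borel probability measures λ, μ on [0,1]. -/

import Mathlib

/-! The continuous and the discretised game are compared by rounding to the grid
`{1/N, …, (N-1)/N}`; no minimax theorem is needed.

On the unit square `A` is nonnegative, vanishes on the diagonal, and is `(n-1)`-Lipschitz in each
variable (`abs_Aker_sub_left`, `abs_Aker_sub_right`). Let `r` send a point of `[0,1]` to its
nearest grid point. The distance is at most `1/(2N)`, except close to `0` and `1`, which are not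
grid points. There the monotonicity of `A` in `x` on both sides of the diagonal, and direct
estimates in `y`, still give, for grid points `p` (`Aker_round_left`, `Aker_round_right`),
`A(r x, p) ≤ A(x, p) + (n-1)/(2N)` and `A(p, y) ≤ A(p, r y) + (n-1)/(2N)`.

A mixed strategy on the grid is also a measure on `[0,1]`, and a measure on `[0,1]` becomes a
mixed strategy on the grid by pushing it forward along `r`. Integrating the two inequalities shows
that the guaranteed payoff of the maximiser drops by at most `(n-1)/(2N)` when passing from one
game to the other, in either direction. -/

open MeasureTheory Set

noncomputable section

/-- The payoff kernel `A(x,y)` on the unit square (eq. (3.2)). -/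
def Aker (n : ℕ) (x y : ℝ) : ℝ :=
  if y < x then y * (x ^ (n - 1) - y ^ (n - 1))
  else (1 - y) * ∑ k ∈ Finset.Icc 1 (n - 1), (y ^ k - x ^ k)

/-- `Ā(λ, μ) = ∫₀¹∫₀¹ A(x,y) dλ(x) dμ(y)`. -/
def Abar (n : ℕ) (lam mu : Measure ℝ) : ℝ :=
  ∫ y, (∫ x, Aker n x y ∂lam) ∂mu

/-- A Borel probability measure on `[0,1]` (encoded as a probability measure on `ℝ`
concentrated on `[0,1]`). -/
def IsProb01 (mu : Measure ℝ) : Prop :=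
  IsProbabilityMeasure mu ∧ mu (Icc (0 : ℝ) 1)ᶜ = 0

/-- The value `A*_n = sup_μ inf_λ Ā(λ,μ)` of the infinite game with kernel `A`. -/
def Astarn (n : ℕ) : ℝ :=
  sSup {s : ℝ | ∃ mu : Measure ℝ, IsProb01 mu ∧
    s = sInf {v : ℝ | ∃ lam : Measure ℝ, IsProb01 lam ∧ v = Abar n lam mu}}

/-- The matrix `A_N` with entries `A(i/N, j/N)`, `i, j ∈ {1, …, N−1}` (index `i : Fin (N-1)`
stands for `i+1`). -/
def ANmat (n N : ℕ) (i j : Fin (N - 1)) : ℝ :=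
  Aker n (((i : ℕ) + 1 : ℝ) / N) (((j : ℕ) + 1 : ℝ) / N)

/-- The value `A*_{n,N} = max_μ min_λ λᵀ A_N μ` of the matrix game (4.4). -/
def AstarnN (n N : ℕ) : ℝ :=
  sSup {r : ℝ | ∃ mu ∈ stdSimplex ℝ (Fin (N - 1)),
    r = sInf {v : ℝ | ∃ lam ∈ stdSimplex ℝ (Fin (N - 1)),
      v = ∑ i, ∑ j, lam i * ANmat n N i j * mu j}}

/-! ### Estimates for the kernel -/

lemma Aker_of_le {n : ℕ} {x y : ℝ} (h : x ≤ y) :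
    Aker n x y = (1 - y) * ∑ k ∈ Finset.Icc 1 (n - 1), (y ^ k - x ^ k) := by
  simp [Aker, not_lt.2 h]

/-- The two formulas for the kernel agree on the diagonal. -/
lemma Aker_of_ge {n : ℕ} {x y : ℝ} (h : y ≤ x) :
    Aker n x y = y * (x ^ (n - 1) - y ^ (n - 1)) := by
  rcases h.lt_or_eq with h | rfl
  · simp [Aker, h]
  · simp [Aker]

lemma pow_sub_nonneg {a b : ℝ} (ha : 0 ≤ a) (hab : a ≤ b) (k : ℕ) : 0 ≤ b ^ k - a ^ k :=
  sub_nonneg.2 (pow_le_pow_left₀ ha hab k)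

lemma pow_sub_le_one {a b : ℝ} (ha : 0 ≤ a) (hab : a ≤ b) (hb : b ≤ 1) (k : ℕ) :
    b ^ k - a ^ k ≤ 1 := by
  have h1 := pow_le_one₀ (n := k) (ha.trans hab) hb
  have h2 := pow_nonneg ha k
  linarith

lemma pow_sub_le_mul {a b : ℝ} (ha : 0 ≤ a) (hab : a ≤ b) (hb : b ≤ 1) (k : ℕ) :
    b ^ k - a ^ k ≤ k * (b - a) := by
  induction k with
  | zero => simp
  | succ k ih =>
    have h1 := pow_le_one₀ (n := k) ha (hab.trans hb)
    have h2 := mul_le_mul_of_nonneg_right h1 (sub_nonneg.2 hab)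
    have h3 := mul_le_mul_of_nonneg_right hb (pow_sub_nonneg ha hab k)
    push_cast
    calc b ^ (k + 1) - a ^ (k + 1) = b * (b ^ k - a ^ k) + a ^ k * (b - a) := by ring
      _ ≤ _ := by linarith

/-- The factor `1 - b` makes the Lipschitz constant of `x ↦ x ^ k` on `[0, b]` independent
of `k`. -/
lemma one_sub_mul_pow_sub_le {a b : ℝ} (ha : 0 ≤ a) (hab : a ≤ b) (hb : b ≤ 1) (k : ℕ) :
    (1 - b) * (b ^ k - a ^ k) ≤ b - a := by
  induction k with
  | zero => simpa using hab
  | succ k ih =>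
    have h1 := pow_le_one₀ (n := k) ha (hab.trans hb)
    have h2 := mul_le_mul_of_nonneg_left h1
      (mul_nonneg (sub_nonneg.2 hb) (sub_nonneg.2 hab))
    have h3 := mul_le_mul_of_nonneg_left ih (ha.trans hab)
    calc (1 - b) * (b ^ (k + 1) - a ^ (k + 1))
        = b * ((1 - b) * (b ^ k - a ^ k)) + (1 - b) * (b - a) * a ^ k := by ring
      _ ≤ b * (b - a) + (1 - b) * (b - a) * 1 := by linarith
      _ = b - a := by ring

lemma sum_Icc_le {m : ℕ} {f : ℕ → ℝ} {c : ℝ} (h : ∀ k, f k ≤ c) :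
    ∑ k ∈ Finset.Icc 1 m, f k ≤ m * c := by
  simpa using Finset.sum_le_card_nsmul (Finset.Icc 1 m) f c (fun k _ => h k)

lemma Aker_nonneg {n : ℕ} {x y : ℝ} (hx : x ∈ Icc (0 : ℝ) 1) (hy : y ∈ Icc (0 : ℝ) 1) :
    0 ≤ Aker n x y := by
  rcases le_total x y with h | h
  · rw [Aker_of_le h]
    exact mul_nonneg (sub_nonneg.2 hy.2) (Finset.sum_nonneg fun k _ => pow_sub_nonneg hx.1 h k)
  · rw [Aker_of_ge h]
    exact mul_nonneg hy.1 (pow_sub_nonneg hy.1 h _)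

lemma Aker_le_mul_abs {n : ℕ} {x y : ℝ} (hx : x ∈ Icc (0 : ℝ) 1) (hy : y ∈ Icc (0 : ℝ) 1) :
    Aker n x y ≤ (n - 1 : ℕ) * |x - y| := by
  rcases le_total x y with h | h
  · rw [Aker_of_le h, abs_sub_comm, abs_of_nonneg (sub_nonneg.2 h), Finset.mul_sum]
    exact sum_Icc_le fun k => one_sub_mul_pow_sub_le hx.1 h hy.2 k
  · rw [Aker_of_ge h, abs_of_nonneg (sub_nonneg.2 h)]
    have h1 := pow_sub_le_mul hy.1 h hx.2 (n - 1)
    have h2 := mul_le_mul_of_nonneg_right hy.2 (pow_sub_nonneg hy.1 h (n - 1))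
    linarith

lemma Aker_le {n : ℕ} {x y : ℝ} (hx : x ∈ Icc (0 : ℝ) 1) (hy : y ∈ Icc (0 : ℝ) 1) :
    Aker n x y ≤ (n - 1 : ℕ) := by
  refine (Aker_le_mul_abs hx hy).trans (mul_le_of_le_one_right (Nat.cast_nonneg _) ?_)
  rw [abs_le]
  constructor <;> linarith [hx.1, hx.2, hy.1, hy.2]

/-- For fixed `y`, the kernel decreases in `x` up to the diagonal. -/
lemma Aker_anti_left {n : ℕ} {x x' y : ℝ} (hx : 0 ≤ x) (h : x ≤ x') (h' : x' ≤ y) (hy : y ≤ 1) :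
    Aker n x' y ≤ Aker n x y := by
  rw [Aker_of_le h', Aker_of_le (h.trans h')]
  refine mul_le_mul_of_nonneg_left (Finset.sum_le_sum fun k _ => ?_) (sub_nonneg.2 hy)
  linarith [pow_sub_nonneg hx h k]

/-- For fixed `y`, the kernel increases in `x` beyond the diagonal. -/
lemma Aker_mono_left {n : ℕ} {x x' y : ℝ} (hy : 0 ≤ y) (h : y ≤ x) (h' : x ≤ x') :
    Aker n x y ≤ Aker n x' y := by
  rw [Aker_of_ge h, Aker_of_ge (h.trans h')]
  refine mul_le_mul_of_nonneg_left ?_ hy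
  linarith [pow_sub_nonneg (hy.trans h) h' (n - 1)]

/-- If two points lie on opposite sides of `p`, nonnegative quantities bounded by multiples of the
distances to `p` differ by at most the same multiple of the distance of the points. -/
lemma abs_sub_le_of_split {u v m a b p : ℝ} (hm : 0 ≤ m) (hu : 0 ≤ u) (hv : 0 ≤ v)
    (hap : a ≤ p) (hpb : p ≤ b) (h1 : u ≤ m * (b - p)) (h2 : v ≤ m * (p - a)) :
    |u - v| ≤ m * (b - a) := by
  have h3 := mul_nonneg hm (sub_nonneg.2 hap)
  have h4 := mul_nonneg hm (sub_nonneg.2 hpb)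
  rw [abs_le]
  constructor <;> linarith

lemma abs_Aker_sub_left_aux {n : ℕ} {x x' y : ℝ} (hx : x ∈ Icc (0 : ℝ) 1)
    (hx' : x' ∈ Icc (0 : ℝ) 1) (hy : y ∈ Icc (0 : ℝ) 1) (h : x' ≤ x) :
    |Aker n x y - Aker n x' y| ≤ (n - 1 : ℕ) * (x - x') := by
  rcases le_total x y with hxy | hxy
  · rw [abs_sub_comm, abs_of_nonneg (sub_nonneg.2 (Aker_anti_left hx'.1 h hxy hy.2)),
      Aker_of_le hxy, Aker_of_le (h.trans hxy), ← mul_sub, ← Finset.sum_sub_distrib, Finset.mul_sum]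
    refine sum_Icc_le fun k => ?_
    have h1 := one_sub_mul_pow_sub_le hx'.1 h hx.2 k
    have h2 := mul_nonneg (sub_nonneg.2 hxy) (pow_sub_nonneg hx'.1 h k)
    linarith
  rcases le_total x' y with hxy' | hxy'
  · refine abs_sub_le_of_split (Nat.cast_nonneg _) (Aker_nonneg hx hy) (Aker_nonneg hx' hy)
      hxy' hxy ?_ ?_
    · simpa [abs_of_nonneg (sub_nonneg.2 hxy)] using Aker_le_mul_abs (n := n) hx hy
    · simpa [abs_sub_comm x', abs_of_nonneg (sub_nonneg.2 hxy')] using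
        Aker_le_mul_abs (n := n) hx' hy
  · rw [abs_of_nonneg (sub_nonneg.2 (Aker_mono_left hy.1 hxy' h)), Aker_of_ge hxy, Aker_of_ge hxy']
    have h1 := pow_sub_le_mul hx'.1 h hx.2 (n - 1)
    have h2 := mul_le_mul_of_nonneg_right hy.2 (pow_sub_nonneg hx'.1 h (n - 1))
    linarith

lemma abs_Aker_sub_left {n : ℕ} {x x' y : ℝ} (hx : x ∈ Icc (0 : ℝ) 1)
    (hx' : x' ∈ Icc (0 : ℝ) 1) (hy : y ∈ Icc (0 : ℝ) 1) :
    |Aker n x y - Aker n x' y| ≤ (n - 1 : ℕ) * |x - x'| := by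
  rcases le_total x' x with h | h
  · rw [abs_of_nonneg (sub_nonneg.2 h)]
    exact abs_Aker_sub_left_aux hx hx' hy h
  · rw [abs_sub_comm, abs_sub_comm x, abs_of_nonneg (sub_nonneg.2 h)]
    exact abs_Aker_sub_left_aux hx' hx hy h

lemma abs_Aker_sub_right_aux {n : ℕ} (hn : 2 ≤ n) {x y y' : ℝ} (hx : x ∈ Icc (0 : ℝ) 1)
    (hy : y ∈ Icc (0 : ℝ) 1) (hy' : y' ∈ Icc (0 : ℝ) 1) (h : y' ≤ y) :
    |Aker n x y - Aker n x y'| ≤ (n - 1 : ℕ) * (y - y') := by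
  rcases le_total x y' with hxy' | hxy'
  · rw [Aker_of_le hxy', Aker_of_le (hxy'.trans h), Finset.mul_sum, Finset.mul_sum,
      ← Finset.sum_sub_distrib]
    refine (Finset.abs_sum_le_sum_abs _ _).trans (sum_Icc_le fun k => ?_)
    have e : (1 - y) * (y ^ k - x ^ k) - (1 - y') * (y' ^ k - x ^ k)
        = (1 - y) * (y ^ k - y' ^ k) - (y - y') * (y' ^ k - x ^ k) := by ring
    have h1 := one_sub_mul_pow_sub_le hy'.1 h hy.2 k
    have h2 := mul_nonneg (sub_nonneg.2 hy.2) (pow_sub_nonneg hy'.1 h k)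
    have h3 := mul_nonneg (sub_nonneg.2 h) (pow_sub_nonneg hx.1 hxy' k)
    have h4 := mul_le_mul_of_nonneg_left (pow_sub_le_one hx.1 hxy' hy'.2 k) (sub_nonneg.2 h)
    rw [e, abs_le]
    constructor <;> linarith
  rcases le_total x y with hxy | hxy
  · refine abs_sub_le_of_split (Nat.cast_nonneg _) (Aker_nonneg hx hy) (Aker_nonneg hx hy')
      hxy' hxy ?_ ?_
    · simpa [abs_sub_comm x, abs_of_nonneg (sub_nonneg.2 hxy)] using Aker_le_mul_abs (n := n) hx hy
    · simpa [abs_of_nonneg (sub_nonneg.2 hxy')] using Aker_le_mul_abs (n := n) hx hy'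
  · rw [Aker_of_ge hxy, Aker_of_ge hxy']
    have e : y * (x ^ (n - 1) - y ^ (n - 1)) - y' * (x ^ (n - 1) - y' ^ (n - 1))
        = (y - y') * (x ^ (n - 1) - y ^ (n - 1)) - y' * (y ^ (n - 1) - y' ^ (n - 1)) := by ring
    have hd := sub_nonneg.2 h
    have h0 := pow_sub_nonneg hy'.1 h (n - 1)
    have h1 := mul_nonneg hd (pow_sub_nonneg hy.1 hxy (n - 1))
    have h2 := mul_le_mul_of_nonneg_left (pow_sub_le_one hy.1 hxy hx.2 (n - 1)) hd
    have h3 := mul_nonneg hy'.1 h0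
    have h4 := mul_le_mul_of_nonneg_right hy'.2 h0
    have h5 := pow_sub_le_mul hy'.1 h hy.2 (n - 1)
    have hm : (1 : ℝ) ≤ (n - 1 : ℕ) := by exact_mod_cast (by omega : 1 ≤ n - 1)
    have h6 := mul_le_mul_of_nonneg_right hm hd
    rw [e, abs_le]
    constructor <;> linarith

lemma abs_Aker_sub_right {n : ℕ} (hn : 2 ≤ n) {x y y' : ℝ} (hx : x ∈ Icc (0 : ℝ) 1)
    (hy : y ∈ Icc (0 : ℝ) 1) (hy' : y' ∈ Icc (0 : ℝ) 1) :
    |Aker n x y - Aker n x y'| ≤ (n - 1 : ℕ) * |y - y'| := by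
  rcases le_total y' y with h | h
  · rw [abs_of_nonneg (sub_nonneg.2 h)]
    exact abs_Aker_sub_right_aux hn hx hy hy' h
  · rw [abs_sub_comm, abs_sub_comm y, abs_of_nonneg (sub_nonneg.2 h)]
    exact abs_Aker_sub_right_aux hn hx hy' hy h

/-- Moving `y` from near `0` up to the first grid point `h` loses little. -/
lemma Aker_le_near_zero {n : ℕ} (hn : 2 ≤ n) {x y h : ℝ} (hy : 0 ≤ y) (hyh : y ≤ h / 2)
    (hh : h ≤ 1) (hx : h ≤ x) :
    Aker n x y ≤ Aker n x h + (n - 1 : ℕ) * (h / 2) := by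
  have hm : (1 : ℝ) ≤ (n - 1 : ℕ) := by exact_mod_cast (by omega : 1 ≤ n - 1)
  rw [Aker_of_ge hx, Aker_of_ge (by linarith : y ≤ x)]
  have h1 := mul_nonneg (by linarith : 0 ≤ h - y)
    (pow_sub_nonneg (by linarith : 0 ≤ h) hx (n - 1))
  have h2 : 0 ≤ y * y ^ (n - 1) := by positivity
  have h3 := mul_le_mul_of_nonneg_left (pow_le_one₀ (n := n - 1) (by linarith : 0 ≤ h) hh) hy
  have h4 := mul_le_mul_of_nonneg_right hm (by linarith : 0 ≤ h / 2)
  linarith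

/-- Moving `y` from near `1` down to the last grid point `1 - h` loses little. -/
lemma Aker_le_near_one {n : ℕ} {x y h : ℝ} (hx : 0 ≤ x) (hxh : x ≤ 1 - h) (hh : 0 ≤ h)
    (hy : 1 - h / 2 ≤ y) (hy1 : y ≤ 1) :
    Aker n x y ≤ Aker n x (1 - h) + (n - 1 : ℕ) * (h / 2) := by
  rw [← sub_le_iff_le_add', Aker_of_le hxh, Aker_of_le (by linarith : x ≤ y), Finset.mul_sum,
    Finset.mul_sum, ← Finset.sum_sub_distrib]
  refine sum_Icc_le fun k => ?_
  have hg : 1 - h ≤ y := by linarith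
  have h1 := mul_nonneg (sub_nonneg.2 hg) (pow_sub_nonneg hx hxh k)
  have h2 := mul_le_mul_of_nonneg_left (pow_sub_le_one (hx.trans hxh) hg hy1 k) (sub_nonneg.2 hy1)
  linarith

/-! ### Rounding to the grid -/

/-- The grid point `(i+1)/N`, in the form in which it occurs in `ANmat`. -/
def gridPt (N : ℕ) (i : Fin (N - 1)) : ℝ := ((i : ℕ) + 1 : ℝ) / N

lemma gridPt_bounds {N : ℕ} (i : Fin (N - 1)) :
    (1 : ℝ) / N ≤ gridPt N i ∧ gridPt N i ≤ 1 - 1 / N := by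
  have hlt := i.isLt
  have hN : (0 : ℝ) < N := by exact_mod_cast (by omega : 0 < N)
  have hi : ((i : ℕ) : ℝ) + 1 + 1 ≤ N := by exact_mod_cast (by omega : (i : ℕ) + 1 + 1 ≤ N)
  unfold gridPt
  constructor
  · gcongr
    linarith [Nat.cast_nonneg (α := ℝ) (i : ℕ)]
  · rw [le_sub_iff_add_le, ← add_div, div_le_one hN]
    exact hi

lemma gridPt_mem {N : ℕ} (i : Fin (N - 1)) : gridPt N i ∈ Icc (0 : ℝ) 1 := by
  have h := gridPt_bounds i
  have : (0 : ℝ) ≤ 1 / N := by positivity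
  exact ⟨by linarith, by linarith⟩

/-- `r` rounds points of `[0,1]` to a nearest point of the grid `{1/N, …, (N-1)/N}`: the distance
is at most `1/(2N)` unless the argument is close to `0` or to `1`. -/
def IsRounding (N : ℕ) (r : ℝ → Fin (N - 1)) : Prop :=
  ∀ y ∈ Icc (0 : ℝ) 1, |y - gridPt N (r y)| ≤ 1 / N / 2 ∨
    (gridPt N (r y) = 1 / N ∧ y ≤ 1 / N / 2) ∨
    (gridPt N (r y) = 1 - 1 / N ∧ 1 - 1 / N / 2 ≤ y)

lemma exists_rounding {N : ℕ} (hN : 2 ≤ N) :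
    ∃ r : ℝ → Fin (N - 1), Measurable r ∧ IsRounding N r := by
  let c : ℕ → Fin (N - 1) := fun k => ⟨min (k - 1) (N - 2), by omega⟩
  refine ⟨fun y => c ⌊N * y + 1 / 2⌋₊, ?_, ?_⟩
  · exact (measurable_from_top (f := c)).comp
      (Nat.measurable_floor.comp ((measurable_const.mul measurable_id).add_const _))
  intro y hy
  have hN0 : (0 : ℝ) < N := by exact_mod_cast (by omega : 0 < N)
  set k := ⌊N * y + 1 / 2⌋₊ with hk
  have hpos : 0 ≤ N * y := mul_nonneg hN0.le hy.1
  have hk1 : (k : ℝ) ≤ N * y + 1 / 2 := Nat.floor_le (by linarith)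
  have hk2 : N * y + 1 / 2 < k + 1 := Nat.lt_floor_add_one _
  have hyN : N * y ≤ N := by nlinarith [hy.2]
  rcases Nat.eq_zero_or_pos k with h0 | h0
  · right; left
    constructor
    · have hv : (c k : ℕ) = 0 := by simp [c, h0]
      change (((c k : ℕ) : ℝ) + 1) / N = 1 / N
      rw [hv]
      simp
    · rw [h0] at hk2
      rw [div_div, le_div_iff₀ (by positivity)]
      push_cast at hk2
      linarith
  rcases Nat.lt_or_ge (N - 1) k with h1 | h1
  · right; right
    have hv : ((c k : ℕ) : ℝ) + 1 = N - 1 := by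
      have : (c k : ℕ) + 1 + 1 = N := by
        simp only [c]; omega
      rw [eq_sub_iff_add_eq]
      exact_mod_cast this
    constructor
    · change (((c k : ℕ) : ℝ) + 1) / N = _
      rw [hv, sub_div, div_self hN0.ne']
    · have : (N : ℝ) ≤ k := by exact_mod_cast (by omega : N ≤ k)
      rw [sub_le_comm, div_div, le_div_iff₀ (by positivity)]
      linarith
  · left
    have hv : ((c k : ℕ) : ℝ) + 1 = k := by
      have : (c k : ℕ) + 1 = k := by
        simp only [c]; omega
      exact_mod_cast this
    change |y - (((c k : ℕ) : ℝ) + 1) / N| ≤ _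
    rw [hv, div_div]
    have e : y - k / N = (N * y - k) / N := by field_simp
    rw [e, abs_div, abs_of_pos hN0, div_le_div_iff₀ hN0 (by positivity)]
    have : |N * y - k| ≤ 1 / 2 := by rw [abs_le]; constructor <;> linarith
    nlinarith

lemma Aker_round_left {n N : ℕ} {r : ℝ → Fin (N - 1)} (hr : IsRounding N r)
    {x : ℝ} (hx : x ∈ Icc (0 : ℝ) 1) (j : Fin (N - 1)) :
    Aker n (gridPt N (r x)) (gridPt N j) ≤
      Aker n x (gridPt N j) + (n - 1 : ℕ) * (1 / N / 2) := by
  have hj := gridPt_bounds j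
  have hc : (0 : ℝ) ≤ (n - 1 : ℕ) * (1 / N / 2) := by positivity
  have hN : (0 : ℝ) ≤ 1 / N := by positivity
  rcases hr x hx with h | ⟨h, h'⟩ | ⟨h, h'⟩
  · have h1 := (abs_le.1 (abs_Aker_sub_left (n := n) hx (gridPt_mem (r x)) (gridPt_mem j))).1
    have h2 := mul_le_mul_of_nonneg_left h (Nat.cast_nonneg (α := ℝ) (n - 1))
    linarith
  · rw [h]
    have := Aker_anti_left (n := n) hx.1 (by linarith : x ≤ 1 / N) hj.1 (gridPt_mem j).2
    linarith
  · rw [h]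
    have := Aker_mono_left (n := n) (gridPt_mem j).1 hj.2 (by linarith : 1 - 1 / (N : ℝ) ≤ x)
    linarith

lemma Aker_round_right {n N : ℕ} (hn : 2 ≤ n) {r : ℝ → Fin (N - 1)} (hr : IsRounding N r)
    {y : ℝ} (hy : y ∈ Icc (0 : ℝ) 1) (i : Fin (N - 1)) :
    Aker n (gridPt N i) y ≤
      Aker n (gridPt N i) (gridPt N (r y)) + (n - 1 : ℕ) * (1 / N / 2) := by
  have hi := gridPt_bounds i
  have hi' := gridPt_mem i
  have hN : (0 : ℝ) ≤ 1 / N := by positivity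
  rcases hr y hy with h | ⟨h, h'⟩ | ⟨h, h'⟩
  · have h1 := (abs_le.1 (abs_Aker_sub_right hn hi' hy (gridPt_mem (r y)))).2
    have h2 := mul_le_mul_of_nonneg_left h (Nat.cast_nonneg (α := ℝ) (n - 1))
    linarith
  · rw [h]
    exact Aker_le_near_zero hn hy.1 h' (hi.1.trans hi'.2) hi.1
  · rw [h]
    exact Aker_le_near_one hi'.1 hi.2 hN h' hy.2

/-! ### Passing between measures and grid strategies -/

/-- The measure on `[0,1]` carried by the grid that corresponds to the weights `w`. -/
def gridMeas (N : ℕ) (w : Fin (N - 1) → ℝ) : Measure ℝ :=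
  ∑ i, ENNReal.ofReal (w i) • Measure.dirac (gridPt N i)

lemma gridMeas_isProb01 {N : ℕ} {w : Fin (N - 1) → ℝ} (hw : w ∈ stdSimplex ℝ (Fin (N - 1))) :
    IsProb01 (gridMeas N w) := by
  refine ⟨⟨?_⟩, ?_⟩
  · simp [gridMeas, ← ENNReal.ofReal_sum_of_nonneg fun i _ => hw.1 i, hw.2]
  · simp only [gridMeas, Measure.finsetSum_apply, Measure.smul_apply, smul_eq_mul]
    refine Finset.sum_eq_zero fun i _ => ?_
    rw [Measure.dirac_apply' _ measurableSet_Icc.compl]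
    simp [indicator, (gridPt_mem i).1, (gridPt_mem i).2]

lemma integral_gridMeas {N : ℕ} {w : Fin (N - 1) → ℝ} (hw : w ∈ stdSimplex ℝ (Fin (N - 1)))
    (f : ℝ → ℝ) : ∫ x, f x ∂(gridMeas N w) = ∑ i, w i * f (gridPt N i) := by
  unfold gridMeas
  rw [integral_finsetSum_measure]
  · refine Finset.sum_congr rfl fun i _ => ?_
    rw [integral_smul_measure, integral_dirac, ENNReal.toReal_ofReal (hw.1 i), smul_eq_mul]
  · intro i _
    exact (integrable_dirac (by simp)).smul_measure ENNReal.ofReal_ne_top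

/-- The grid weights obtained by pushing `mu` forward along the rounding map `r`. -/
def roundW {N : ℕ} (r : ℝ → Fin (N - 1)) (mu : Measure ℝ) (i : Fin (N - 1)) : ℝ :=
  mu.real (r ⁻¹' {i})

lemma integral_round {N : ℕ} {r : ℝ → Fin (N - 1)} (hr : Measurable r) {mu : Measure ℝ}
    [IsProbabilityMeasure mu] (f : Fin (N - 1) → ℝ) :
    ∫ y, f (r y) ∂mu = ∑ i, roundW r mu i * f i := by
  have : IsProbabilityMeasure (mu.map r) := Measure.isProbabilityMeasure_map hr.aemeasurable
  rw [← integral_map (f := f) hr.aemeasurable (by fun_prop), integral_fintype .of_finite]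
  refine Finset.sum_congr rfl fun i _ => ?_
  rw [map_measureReal_apply hr (measurableSet_singleton i), smul_eq_mul, roundW]

lemma roundW_mem {N : ℕ} {r : ℝ → Fin (N - 1)} (hr : Measurable r) {mu : Measure ℝ}
    [IsProbabilityMeasure mu] : roundW r mu ∈ stdSimplex ℝ (Fin (N - 1)) := by
  refine ⟨fun i => measureReal_nonneg, ?_⟩
  simpa using (integral_round (mu := mu) hr (fun _ => 1)).symm

lemma IsProb01.ae_mem {mu : Measure ℝ} (h : IsProb01 mu) : ∀ᵐ y ∂mu, y ∈ Icc (0 : ℝ) 1 :=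
  mem_ae_iff.2 h.2

lemma measurable_Aker_left (n : ℕ) (y : ℝ) : Measurable fun x => Aker n x y :=
  Measurable.ite measurableSet_Ioi (by fun_prop) (by fun_prop)

lemma measurable_Aker_right (n : ℕ) (x : ℝ) : Measurable fun y => Aker n x y :=
  Measurable.ite measurableSet_Iio (by fun_prop) (by fun_prop)

lemma integrable_Aker_left {n : ℕ} {mu : Measure ℝ} (h : IsProb01 mu) {y : ℝ}
    (hy : y ∈ Icc (0 : ℝ) 1) : Integrable (fun x => Aker n x y) mu :=
  have := h.1
  Integrable.of_mem_Icc 0 (n - 1 : ℕ) (measurable_Aker_left n y).aemeasurable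
    (h.ae_mem.mono fun _ hx => ⟨Aker_nonneg hx hy, Aker_le hx hy⟩)

lemma integrable_Aker_right {n : ℕ} {mu : Measure ℝ} (h : IsProb01 mu) {x : ℝ}
    (hx : x ∈ Icc (0 : ℝ) 1) : Integrable (fun y => Aker n x y) mu :=
  have := h.1
  Integrable.of_mem_Icc 0 (n - 1 : ℕ) (measurable_Aker_right n x).aemeasurable
    (h.ae_mem.mono fun _ hy => ⟨Aker_nonneg hx hy, Aker_le hx hy⟩)

lemma integrable_round {N : ℕ} {r : ℝ → Fin (N - 1)} (hr : Measurable r) {mu : Measure ℝ}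
    [IsProbabilityMeasure mu] (f : Fin (N - 1) → ℝ) : Integrable (fun y => f (r y)) mu := by
  have : IsProbabilityMeasure (mu.map r) := Measure.isProbabilityMeasure_map hr.aemeasurable
  exact (Integrable.of_finite (f := f) (μ := mu.map r)).comp_measurable hr

/-- The payoff `λᵀ A_N μ` of the matrix game. -/
def matPayoff (n N : ℕ) (lam mu : Fin (N - 1) → ℝ) : ℝ :=
  ∑ i, ∑ j, lam i * ANmat n N i j * mu j

/-- Rounding the minimiser's strategy against a grid strategy of the maximiser. -/
lemma matPayoff_roundW_le {n N : ℕ} {r : ℝ → Fin (N - 1)} (hrm : Measurable r)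
    (hr : IsRounding N r) {lam : Measure ℝ} (hl : IsProb01 lam) {mu : Fin (N - 1) → ℝ}
    (hmu : mu ∈ stdSimplex ℝ (Fin (N - 1))) :
    matPayoff n N (roundW r lam) mu ≤ Abar n lam (gridMeas N mu) + (n - 1 : ℕ) * (1 / N / 2) := by
  have := hl.1
  set c : ℝ := (n - 1 : ℕ) * (1 / N / 2) with hc
  have e : matPayoff n N (roundW r lam) mu = ∑ j, mu j * ∑ i, roundW r lam i * ANmat n N i j := by
    unfold matPayoff
    rw [Finset.sum_comm]
    refine Finset.sum_congr rfl fun j _ => ?_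
    rw [Finset.mul_sum]
    exact Finset.sum_congr rfl fun i _ => by ring
  have e2 : Abar n lam (gridMeas N mu) + c
      = ∑ j, mu j * (∫ x, Aker n x (gridPt N j) ∂lam + c) := by
    simp only [mul_add, Finset.sum_add_distrib, ← Finset.sum_mul, hmu.2, one_mul]
    rw [Abar, integral_gridMeas hmu (fun y => ∫ x, Aker n x y ∂lam)]
  rw [e, e2]
  refine Finset.sum_le_sum fun j _ => mul_le_mul_of_nonneg_left ?_ (hmu.1 j)
  rw [← integral_round hrm (fun i => ANmat n N i j)]
  calc ∫ y, ANmat n N (r y) j ∂lam ≤ ∫ x, (Aker n x (gridPt N j) + c) ∂lam :=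
        integral_mono_ae (integrable_round hrm fun i => ANmat n N i j)
          ((integrable_Aker_left hl (gridPt_mem j)).add (integrable_const c))
          (hl.ae_mem.mono fun x hx => Aker_round_left hr hx j)
    _ = _ := by
        rw [integral_add (integrable_Aker_left hl (gridPt_mem j)) (integrable_const c)]
        simp

/-- Rounding the maximiser's strategy against a grid strategy of the minimiser. -/
lemma Abar_gridMeas_le {n N : ℕ} (hn : 2 ≤ n) {r : ℝ → Fin (N - 1)} (hrm : Measurable r)
    (hr : IsRounding N r) {mu : Measure ℝ} (hm : IsProb01 mu) {lam : Fin (N - 1) → ℝ}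
    (hl : lam ∈ stdSimplex ℝ (Fin (N - 1))) :
    Abar n (gridMeas N lam) mu ≤ matPayoff n N lam (roundW r mu) + (n - 1 : ℕ) * (1 / N / 2) := by
  have := hm.1
  set c : ℝ := (n - 1 : ℕ) * (1 / N / 2) with hc
  have e : matPayoff n N lam (roundW r mu) + c
      = ∑ i, lam i * (∑ j, roundW r mu j * ANmat n N i j + c) := by
    simp only [mul_add, Finset.sum_add_distrib, ← Finset.sum_mul, hl.2, one_mul]
    congr 1
    refine Finset.sum_congr rfl fun i _ => ?_
    rw [Finset.mul_sum]
    exact Finset.sum_congr rfl fun j _ => by ring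
  have e2 : Abar n (gridMeas N lam) mu = ∑ i, lam i * ∫ y, Aker n (gridPt N i) y ∂mu := by
    unfold Abar
    simp_rw [fun y => integral_gridMeas hl (fun x => Aker n x y)]
    rw [integral_finsetSum _ fun i _ => (integrable_Aker_right hm (gridPt_mem i)).const_mul _]
    simp_rw [integral_const_mul]
  rw [e, e2]
  refine Finset.sum_le_sum fun i _ => mul_le_mul_of_nonneg_left ?_ (hl.1 i)
  rw [← integral_round hrm (fun j => ANmat n N i j)]
  have hi : Integrable (fun y => ANmat n N i (r y)) mu := integrable_round hrm _
  calc ∫ y, Aker n (gridPt N i) y ∂mu ≤ ∫ y, (ANmat n N i (r y) + c) ∂mu :=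
        integral_mono_ae (integrable_Aker_right hm (gridPt_mem i)) (hi.add (integrable_const c))
          (hm.ae_mem.mono fun y hy => Aker_round_right hn hr hy i)
    _ = _ := by
        rw [integral_add hi (integrable_const c)]
        simp

/-! ### Comparison of the values -/

/-- The payoff that the maximiser's strategy `mu` guarantees in the infinite game. -/
def guar (n : ℕ) (mu : Measure ℝ) : ℝ :=
  sInf {v : ℝ | ∃ lam : Measure ℝ, IsProb01 lam ∧ v = Abar n lam mu}

/-- The payoff that the maximiser's strategy `mu` guarantees in the matrix game. -/
def guarN (n N : ℕ) (mu : Fin (N - 1) → ℝ) : ℝ :=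
  sInf {v : ℝ | ∃ lam ∈ stdSimplex ℝ (Fin (N - 1)), v = matPayoff n N lam mu}

lemma isProb01_dirac_zero : IsProb01 (Measure.dirac 0) := by
  refine ⟨inferInstance, ?_⟩
  rw [Measure.dirac_apply' _ measurableSet_Icc.compl]
  simp

lemma guar_le {n : ℕ} {lam mu : Measure ℝ} (hm : IsProb01 mu) (hl : IsProb01 lam) :
    guar n mu ≤ Abar n lam mu := by
  refine csInf_le ⟨0, ?_⟩ ⟨lam, hl, rfl⟩
  rintro _ ⟨l, hl, rfl⟩
  exact integral_nonneg_of_ae (hm.ae_mem.mono fun y hy =>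
    integral_nonneg_of_ae (hl.ae_mem.mono fun x hx => Aker_nonneg hx hy))

lemma guarN_le {n N : ℕ} {lam mu : Fin (N - 1) → ℝ} (hm : mu ∈ stdSimplex ℝ (Fin (N - 1)))
    (hl : lam ∈ stdSimplex ℝ (Fin (N - 1))) : guarN n N mu ≤ matPayoff n N lam mu := by
  refine csInf_le ⟨0, ?_⟩ ⟨lam, hl, rfl⟩
  rintro _ ⟨l, hl, rfl⟩
  exact Finset.sum_nonneg fun i _ => Finset.sum_nonneg fun j _ =>
    mul_nonneg (mul_nonneg (hl.1 i) (Aker_nonneg (gridPt_mem i) (gridPt_mem j))) (hm.1 j)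

lemma guar_le_const {n : ℕ} {mu : Measure ℝ} (hm : IsProb01 mu) : guar n mu ≤ (n - 1 : ℕ) := by
  have := hm.1
  refine (guar_le hm isProb01_dirac_zero).trans ?_
  have h0 : (0 : ℝ) ∈ Icc (0 : ℝ) 1 := by simp
  simp only [Abar, integral_dirac]
  calc ∫ y, Aker n 0 y ∂mu ≤ ∫ _, ((n - 1 : ℕ) : ℝ) ∂mu :=
        integral_mono_ae (integrable_Aker_right hm h0) (integrable_const _)
          (hm.ae_mem.mono fun y hy => Aker_le h0 hy)
    _ = _ := by simp

/-- Theorem 4(i), eq. (4.5): `|A*_n − A*_{n,N}| ≤ (n−1)/(2N)`. -/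
theorem abs_Astarn_sub_AstarnN_le (n N : ℕ) (hn : 2 ≤ n) (hN : 2 ≤ N) :
    |Astarn n - AstarnN n N| ≤ ((n : ℝ) - 1) / (2 * N) := by
  have hc : ((n : ℝ) - 1) / (2 * N) = (n - 1 : ℕ) * (1 / N / 2) := by
    rw [Nat.cast_sub (by omega)]
    push_cast
    field_simp
  rw [hc]
  set c : ℝ := (n - 1 : ℕ) * (1 / N / 2) with hcdef
  obtain ⟨r, hrm, hr⟩ := exists_rounding hN
  have : Nonempty (Fin (N - 1)) := ⟨r 0⟩
  obtain ⟨w, hw⟩ : (stdSimplex ℝ (Fin (N - 1))).Nonempty :=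
    ⟨_, roundW_mem (mu := Measure.dirac 0) hrm⟩
  have key1 : ∀ mu ∈ stdSimplex ℝ (Fin (N - 1)), guarN n N mu ≤ guar n (gridMeas N mu) + c := by
    intro mu hmu
    rw [← sub_le_iff_le_add]
    refine le_csInf ⟨_, _, isProb01_dirac_zero, rfl⟩ ?_
    rintro _ ⟨l, hl, rfl⟩
    have := hl.1
    have h1 := guarN_le (n := n) hmu (roundW_mem (mu := l) hrm)
    have h2 := matPayoff_roundW_le (n := n) hrm hr hl hmu
    rw [← hcdef] at h2
    linarith
  have key2 : ∀ mu : Measure ℝ, IsProb01 mu → guar n mu ≤ guarN n N (roundW r mu) + c := by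
    intro mu hmu
    rw [← sub_le_iff_le_add]
    refine le_csInf ⟨_, _, hw, rfl⟩ ?_
    rintro _ ⟨l, hl, rfl⟩
    have h1 := guar_le (n := n) hmu (gridMeas_isProb01 hl)
    have h2 := Abar_gridMeas_le hn hrm hr hmu hl
    rw [← hcdef] at h2
    linarith
  have le1 : ∀ mu : Measure ℝ, IsProb01 mu → guar n mu ≤ Astarn n := by
    intro mu hmu
    refine le_csSup ⟨(n - 1 : ℕ), ?_⟩ ⟨mu, hmu, rfl⟩
    rintro _ ⟨m, hm, rfl⟩
    exact guar_le_const hm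
  have le2 : ∀ mu ∈ stdSimplex ℝ (Fin (N - 1)), guarN n N mu ≤ Astarn n + c := fun mu hmu =>
    (key1 mu hmu).trans (by linarith [le1 _ (gridMeas_isProb01 hmu)])
  have le3 : ∀ mu ∈ stdSimplex ℝ (Fin (N - 1)), guarN n N mu ≤ AstarnN n N := by
    intro mu hmu
    refine le_csSup ⟨Astarn n + c, ?_⟩ ⟨mu, hmu, rfl⟩
    rintro _ ⟨m, hm, rfl⟩
    exact le2 m hm
  have a1 : Astarn n ≤ AstarnN n N + c := by
    refine csSup_le ⟨_, _, isProb01_dirac_zero, rfl⟩ ?_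
    rintro _ ⟨m, hm, rfl⟩
    have := hm.1
    exact (key2 m hm).trans (by linarith [le3 _ (roundW_mem (mu := m) hrm)])
  have a2 : AstarnN n N ≤ Astarn n + c := by
    refine csSup_le ⟨_, w, hw, rfl⟩ ?_
    rintro _ ⟨m, hm, rfl⟩
    exact le2 m hm
  rw [abs_le]
  constructor <;> linarith
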